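/- For all r, t ≥ 2, the partition dimension of the grid graph P_r × P_t equals 3. -/

import Mathlib

open SimpleGraph

/-- Distance from a vertex to a set of vertices: `min {d(v,x) : x ∈ P}`. -/
noncomputable def distToSet {V : Type*} (G : SimpleGraph V) (v : V) (P : Set V) : ℕ :=
  sInf ((G.dist v) '' P)

/-- `S` is a resolving set of `G`. -/
def IsResolvingSet {V : Type*} (G : SimpleGraph V) (S : Set V) : Prop :=
  ∀ u v : V, u ≠ v → ∃ w ∈ S, G.dist u w ≠ G.dist v w

/-- The metric dimension of `G`. -/
noncomputable def metricDim {V : Type*} (G : SimpleGraph V) : ℕ :=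
  sInf {n | ∃ S : Finset V, S.card = n ∧ IsResolvingSet G ↑S}

/-- `Π` is a resolving partition of `G`: a partition of the vertex set such that
distinct vertices have distinct vectors of distances to the parts. -/
def IsResolvingPartition {V : Type*} (G : SimpleGraph V) (Pi : Set (Set V)) : Prop :=
  Setoid.IsPartition Pi ∧
    ∀ u v : V, u ≠ v → ∃ P ∈ Pi, distToSet G u P ≠ distToSet G v P

/-- The partition dimension of `G`. -/
noncomputable def partitionDim {V : Type*} (G : SimpleGraph V) : ℕ :=
  sInf {n | ∃ Pi : Finset (Set V), Pi.card = n ∧ IsResolvingPartition G ↑Pi}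

/-!
For the lower bound, suppose that two parts `A` and `Aᶜ` resolve a connected graph. Every vertex of
`A` with a neighbour in `Aᶜ` has distance vector `(0, 1)`, so there is only one such vertex, and
likewise on the other side. Hence a single edge crosses the cut, and it is a bridge. In a Cartesian
product of nontrivial connected graphs every edge lies on a 4-cycle, so there are no bridges.

For the upper bound, the two corners at the ends of one side of the grid resolve it: a vertex
`(i, j)` is recovered from its distances `i + j` and `i + (n - j)` to them. The two corners, as
singleton parts, and the set of all other vertices form a resolving partition.
-/

section distToSet

variable {V : Type*} {G : SimpleGraph V} {u v w : V} {P : Set V}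

lemma distToSet_of_mem (h : v ∈ P) : distToSet G v P = 0 :=
  Nat.sInf_eq_zero.2 <| .inl ⟨v, h, dist_self⟩

lemma distToSet_singleton : distToSet G u {v} = G.dist u v := by
  simp [distToSet]

lemma distToSet_eq_one_of_adj (hG : G.Preconnected) (hv : v ∉ P) (hw : w ∈ P)
    (hvw : G.Adj v w) : distToSet G v P = 1 := by
  refine le_antisymm (Nat.sInf_le ⟨w, hw, dist_eq_one_iff_adj.2 hvw⟩)
    (le_csInf ⟨_, Set.mem_image_of_mem _ hw⟩ ?_)
  rintro _ ⟨x, hx, rfl⟩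
  exact (hG v x).pos_dist_of_ne (ne_of_mem_of_not_mem hx hv).symm

end distToSet

section LowerBound

variable {V : Type*} {G : SimpleGraph V} {A B : Set V}

lemma IsResolvingPartition.nontrivial [Nontrivial V] {Pi : Set (Set V)}
    (h : IsResolvingPartition G Pi) : Pi.Nontrivial := by
  obtain ⟨u, v, huv⟩ := exists_pair_ne V
  obtain ⟨P, hP, hdist⟩ := h.2 u v huv
  obtain ⟨w, hw⟩ : ∃ w, w ∉ P := by
    by_contra! hall
    exact hdist ((distToSet_of_mem (hall u)).trans (distToSet_of_mem (hall v)).symm)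
  obtain ⟨Q, ⟨hQ, hwQ⟩, -⟩ := h.1.2 w
  exact ⟨P, hP, Q, hQ, (ne_of_mem_of_not_mem' hwQ hw).symm⟩

lemma eq_compl_of_isPartition_pair (hAB : A ≠ B) (h : Setoid.IsPartition {A, B}) : B = Aᶜ := by
  refine (IsCompl.compl_eq ⟨?_, ?_⟩).symm
  · exact h.pairwiseDisjoint (by simp) (by simp) hAB
  · exact codisjoint_iff.2 ((Set.sUnion_pair A B).symm.trans h.sUnion_eq_univ)

lemma IsResolvingPartition.eq_of_adj_compl (h : IsResolvingPartition G {A, Aᶜ})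
    (hG : G.Preconnected) {u v x y : V} (hu : u ∈ A) (hv : v ∈ A) (hx : x ∉ A) (hy : y ∉ A)
    (hux : G.Adj u x) (hvy : G.Adj v y) : u = v := by
  by_contra huv
  obtain ⟨P, rfl | rfl, hdist⟩ := h.2 u v huv
  · exact hdist ((distToSet_of_mem hu).trans (distToSet_of_mem hv).symm)
  · exact hdist ((distToSet_eq_one_of_adj hG (not_not.2 hu) hx hux).trans
      (distToSet_eq_one_of_adj hG (not_not.2 hv) hy hvy).symm)

lemma exists_adj_mem_notMem (hG : G.Preconnected) (hA : A.Nonempty) (hAc : Aᶜ.Nonempty) :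
    ∃ u v, G.Adj u v ∧ u ∈ A ∧ v ∉ A := by
  obtain ⟨a, ha⟩ := hA
  obtain ⟨b, hb⟩ := hAc
  obtain ⟨p⟩ := hG a b
  obtain ⟨d, -, hfst, hsnd⟩ := p.exists_boundary_dart A ha hb
  exact ⟨d.fst, d.snd, d.adj, hfst, hsnd⟩

lemma IsResolvingPartition.not_isEdgeConnected_two (h : IsResolvingPartition G {A, Aᶜ}) :
    ¬ G.IsEdgeConnected 2 := by
  intro hG
  have hconn : G.Preconnected := hG.preconnected two_ne_zero
  have hA : A.Nonempty := Setoid.nonempty_of_mem_partition h.1 (by simp)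
  have hAc : Aᶜ.Nonempty := Setoid.nonempty_of_mem_partition h.1 (by simp)
  obtain ⟨u, v, huv, hu, hv⟩ := exists_adj_mem_notMem hconn hA hAc
  obtain ⟨u', v', huv', hu', hv'⟩ :=
    exists_adj_mem_notMem (isEdgeConnected_two.1 hG s(u, v)) hA hAc
  rw [deleteEdges_adj] at huv'
  have h' : IsResolvingPartition G {Aᶜ, Aᶜᶜ} := by rwa [compl_compl, Set.pair_comm]
  have hfst : u' = u := h.eq_of_adj_compl hconn hu' hu hv' hv huv'.1 huv
  have hsnd : v' = v :=
    h'.eq_of_adj_compl hconn hv' hv (not_not.2 hu') (not_not.2 hu) huv'.1.symm huv.symm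
  exact huv'.2 (by rw [hfst, hsnd, Set.mem_singleton_iff])

theorem IsResolvingPartition.three_le_card [Nontrivial V] {Pi : Finset (Set V)}
    (h : IsResolvingPartition G ↑Pi) (hG : G.IsEdgeConnected 2) : 3 ≤ Pi.card := by
  by_contra! hlt
  have htwo : Pi.card = 2 :=
    le_antisymm (Nat.le_of_lt_succ hlt) (Finset.one_lt_card_iff_nontrivial.2 h.nontrivial)
  obtain ⟨A, B, hAB, rfl⟩ := Finset.card_eq_two.1 htwo
  rw [Finset.coe_pair] at h
  obtain rfl := eq_compl_of_isPartition_pair hAB h.1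
  exact h.not_isEdgeConnected_two hG

end LowerBound

section UpperBound

variable {V : Type*} {G : SimpleGraph V} {S : Finset V}

open Classical in
/-- The partition into the singletons of points of `S` and the complement of `S`, which turns a
resolving set into a resolving partition. The empty set is erased because the complement is not a
part when `S` contains every vertex. -/
noncomputable def isolatingPartition (S : Finset V) : Finset (Set V) :=
  (insert (↑S)ᶜ (S.image ({·}))).erase ∅

lemma mem_isolatingPartition {P : Set V} :
    P ∈ isolatingPartition S ↔ P ≠ ∅ ∧ (P = (↑S)ᶜ ∨ ∃ s ∈ S, {s} = P) := by
  simp [isolatingPartition]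

lemma singleton_mem_isolatingPartition {s : V} (hs : s ∈ S) : {s} ∈ isolatingPartition S :=
  mem_isolatingPartition.2 ⟨Set.singleton_ne_empty s, .inr ⟨s, hs, rfl⟩⟩

lemma isPartition_isolatingPartition (S : Finset V) :
    Setoid.IsPartition (isolatingPartition S : Set (Set V)) := by
  simp only [Setoid.IsPartition, Finset.mem_coe]
  refine ⟨fun h ↦ (mem_isolatingPartition.1 h).1 rfl, fun v ↦ ?_⟩
  by_cases hv : v ∈ S
  · refine ⟨{v}, ⟨singleton_mem_isolatingPartition hv, rfl⟩, ?_⟩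
    rintro P ⟨hP, hvP⟩
    obtain ⟨-, rfl | ⟨s, -, rfl⟩⟩ := mem_isolatingPartition.1 hP
    · exact absurd hv hvP
    · rw [Set.mem_singleton_iff.1 hvP]
  · refine ⟨(↑S)ᶜ, ⟨mem_isolatingPartition.2 ⟨Set.Nonempty.ne_empty ⟨v, hv⟩, .inl rfl⟩, hv⟩, ?_⟩
    rintro P ⟨hP, hvP⟩
    obtain ⟨-, rfl | ⟨s, hs, rfl⟩⟩ := mem_isolatingPartition.1 hP
    · rfl
    · exact absurd (Set.mem_singleton_iff.1 hvP ▸ hs) hv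

lemma card_isolatingPartition_le (S : Finset V) : (isolatingPartition S).card ≤ S.card + 1 := by
  classical
  calc (isolatingPartition S).card
      ≤ (insert (↑S : Set V)ᶜ (S.image ({·}))).card := by
        unfold isolatingPartition; convert Finset.card_erase_le
    _ ≤ (S.image ({·} : V → Set V)).card + 1 := Finset.card_insert_le _ _
    _ ≤ S.card + 1 := by gcongr; exact Finset.card_image_le

lemma IsResolvingSet.isResolvingPartition (hS : IsResolvingSet G ↑S) :
    IsResolvingPartition G ↑(isolatingPartition S) := by
  refine ⟨isPartition_isolatingPartition S, fun u v huv ↦ ?_⟩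
  obtain ⟨s, hs, hdist⟩ := hS u v huv
  refine ⟨{s}, singleton_mem_isolatingPartition hs, ?_⟩
  rwa [distToSet_singleton, distToSet_singleton]

end UpperBound

theorem partitionDim_eq_three_of_isEdgeConnected_two {V : Type*} [Nontrivial V]
    {G : SimpleGraph V} {S : Finset V} (hG : G.IsEdgeConnected 2) (hS : IsResolvingSet G ↑S)
    (hcard : S.card ≤ 2) :
    partitionDim G = 3 := by
  have hPi : IsResolvingPartition G ↑(isolatingPartition S) := hS.isResolvingPartition
  apply le_antisymm
  · calc partitionDim G ≤ (isolatingPartition S).card := Nat.sInf_le ⟨_, rfl, hPi⟩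
      _ ≤ S.card + 1 := card_isolatingPartition_le S
      _ ≤ 3 := Nat.succ_le_succ hcard
  · refine le_csInf ⟨_, _, rfl, hPi⟩ ?_
    rintro _ ⟨Pi, rfl, h⟩
    exact h.three_le_card hG

section BoxProd

variable {V W : Type*} {G : SimpleGraph V} {H : SimpleGraph W}

lemma isEdgeConnected_of_forall_adj {k : ℕ} (hG : G.Preconnected)
    (h : ∀ u v, G.Adj u v → G.IsEdgeReachable k u v) : G.IsEdgeConnected k := by
  intro u v
  obtain ⟨p⟩ := hG u v
  induction p with
  | nil => rfl
  | cons huv _ ih => exact (h _ _ huv).trans ih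

lemma isEdgeReachable_two_of_square {a b c d : V} (hab : G.Adj a b) (hbc : G.Adj b c)
    (hcd : G.Adj c d) (hda : G.Adj d a) (hac : a ≠ c) (hbd : b ≠ d) :
    G.IsEdgeReachable 2 a b := by
  rw [isEdgeReachable_two]
  intro e
  by_cases he : s(a, b) = e
  · subst he
    have had : (G.deleteEdges {s(a, b)}).Adj a d := by
      simp [deleteEdges_adj, hda.symm, hbd.symm, hab.ne]
    have hdc : (G.deleteEdges {s(a, b)}).Adj d c := by
      simp [deleteEdges_adj, hcd.symm, hbd.symm, hda.ne]
    have hcb : (G.deleteEdges {s(a, b)}).Adj c b := by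
      simp [deleteEdges_adj, hbc.symm, hac.symm, hbc.ne.symm]
    exact had.reachable.trans (hdc.reachable.trans hcb.reachable)
  · exact Adj.reachable (deleteEdges_adj.2 ⟨hab, he⟩)

theorem isEdgeConnected_two_boxProd [Nontrivial V] [Nontrivial W] (hG : G.Preconnected)
    (hH : H.Preconnected) : (G □ H).IsEdgeConnected 2 := by
  refine isEdgeConnected_of_forall_adj (hG.boxProd hH) ?_
  rintro ⟨a, c⟩ ⟨b, d⟩ h
  obtain ⟨hab, rfl : c = d⟩ | ⟨hcd, rfl : a = b⟩ := boxProd_adj.1 h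
  · obtain ⟨d, hcd⟩ := hH.exists_adj_of_nontrivial c
    exact isEdgeReachable_two_of_square (c := (b, d)) (d := (a, d)) h
      (boxProd_adj_right.2 hcd) (boxProd_adj_left.2 hab.symm) (boxProd_adj_right.2 hcd.symm)
      (by simp [hab.ne]) (by simp [hab.ne.symm])
  · obtain ⟨b, hab⟩ := hG.exists_adj_of_nontrivial a
    exact isEdgeReachable_two_of_square (c := (b, d)) (d := (b, c)) h
      (boxProd_adj_left.2 hab) (boxProd_adj_right.2 hcd.symm) (boxProd_adj_left.2 hab.symm)
      (by simp [hab.ne]) (by simp [hab.ne])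

lemma dist_boxProd (hG : G.Preconnected) (hH : H.Preconnected) (x y : V × W) :
    (G □ H).dist x y = G.dist x.1 y.1 + H.dist x.2 y.2 := by
  simp only [SimpleGraph.dist, edist_boxProd]
  exact ENat.toNat_add (edist_ne_top_iff_reachable.2 (hG _ _))
    (edist_ne_top_iff_reachable.2 (hH _ _))

end BoxProd

section PathGraph

variable {n : ℕ}

lemma natDist_le_length_pathGraph {i j : Fin n} (p : (pathGraph n).Walk i j) :
    Nat.dist i j ≤ p.length := by
  induction p with
  | nil => simp
  | @cons i k j hik p ih =>
    have hone : Nat.dist i k = 1 := by grind [Nat.dist, pathGraph_adj]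
    calc Nat.dist i j ≤ Nat.dist i k + Nat.dist k j := Nat.dist.triangle_inequality ..
      _ ≤ p.length + 1 := by omega

lemma exists_walk_pathGraph_length_eq_sub {i j : Fin n} (hij : i ≤ j) :
    ∃ p : (pathGraph n).Walk i j, p.length = (j - i : ℕ) := by
  obtain ⟨j, hj⟩ := j
  replace hij : (i : ℕ) ≤ j := hij
  induction j, hij using Nat.le_induction with
  | base => exact ⟨.nil, by simp⟩
  | succ j hij ih =>
    obtain ⟨p, hp⟩ := ih (Nat.lt_of_succ_lt hj)
    refine ⟨p.concat (pathGraph_adj.2 (.inl rfl)), ?_⟩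
    rw [Walk.length_concat, hp, Nat.succ_sub hij]

lemma dist_pathGraph (i j : Fin n) : (pathGraph n).dist i j = Nat.dist i j := by
  wlog hij : i ≤ j generalizing i j
  · rw [dist_comm, Nat.dist_comm, this j i (le_of_not_ge hij)]
  apply le_antisymm
  · obtain ⟨p, hp⟩ := exists_walk_pathGraph_length_eq_sub hij
    rw [Nat.dist_eq_sub_of_le hij, ← hp]
    exact dist_le p
  · obtain ⟨p, hp⟩ := (pathGraph_preconnected n i j).exists_walk_length_eq_dist
    exact hp ▸ natDist_le_length_pathGraph p

end PathGraph

lemma isResolvingSet_grid_corners (m n : ℕ) :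
    IsResolvingSet (pathGraph (m + 1) □ pathGraph (n + 1))
      ↑({(0, 0), (0, Fin.last n)} : Finset (Fin (m + 1) × Fin (n + 1))) := by
  rintro ⟨i, j⟩ ⟨i', j'⟩ hne
  contrapose! hne
  simp only [Finset.coe_pair, Set.mem_insert_iff, Set.mem_singleton_iff, forall_eq_or_imp,
    forall_eq, dist_boxProd (pathGraph_preconnected _) (pathGraph_preconnected _),
    dist_pathGraph, Fin.val_zero, Fin.val_last, Nat.dist_zero_right,
    Nat.dist_eq_sub_of_le (Fin.is_le _)] at hne
  obtain ⟨hzero, hlast⟩ := hne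
  ext <;> dsimp only <;> omega

theorem stmt_16 (r t : ℕ) (hr : 2 ≤ r) (ht : 2 ≤ t) :
    partitionDim ((SimpleGraph.pathGraph r).boxProd (SimpleGraph.pathGraph t)) = 3 := by
  obtain ⟨m, rfl⟩ := Nat.exists_eq_add_of_le' hr
  obtain ⟨n, rfl⟩ := Nat.exists_eq_add_of_le' ht
  exact partitionDim_eq_three_of_isEdgeConnected_two
    (isEdgeConnected_two_boxProd (pathGraph_preconnected _) (pathGraph_preconnected _))
    (isResolvingSet_grid_corners (m + 1) (n + 1)) Finset.card_le_two
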